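/- Suppose φ is an efficient, strategy-proof, non-bossy, and normalized-cone-continuous rule on three agents and three objects. Let u, u' be profiles of no-ties utilities inducing the same profile of strict orders. If for some agent i the lottery φ_i(u) has full support (all three entries strictly positive), then φ(u') = φ(u). -/

import Mathlib

/-!
The proof works along one-parameter families of utilities. Up to a positive affine map, a utility
with `v a > v b > v c` is `(1, β, 0)` with `β ∈ (0, 1)`; strategy-proofness and continuity make the
rule invariant under such maps (`exists_can`), so each utility may be moved along the continuous
path `can a b c β`. If, along such a path of agent `l`, a zero entry of `l`'s lottery stays zero,
then strategy-proofness makes `l`'s lottery constant (it moves on an edge of the simplex, whose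
points are strictly ranked) and non-bossiness makes the whole allocation constant (`edge`,
`const_of_zero`).

Suppose agent `i`, with `a > b > c`, has full support.

* No other agent `j` has the order `a > b > c` (`no_same`). Otherwise let `μ ≠ ν` be the middle
  values of `i` and `j`. Efficiency forces `j`'s support to be `{a, c}` if `ν < μ`, and not to
  contain both `a` and `c` if `ν > μ`. The allocation is constant while `ν` stays on one side of
  `μ`, so, by continuity, it persists just beyond `μ`, where it is inefficient.
* Hence every other agent misses some object, and moving another agent's utility within its order
  changes nothing (`const_other`). Pairwise trades show that one other agent `j` has order
  `a > c > b` and support `{a, c}`, and the remaining agent `k` has `b` on top and support `{b, c}`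
  (`other_type`).
* Let `j` report `a > b > c` instead of `a > c > b`. Letting `b` and `c` become nearly tied,
  strategy-proofness shows that `j`'s probability of `a` is unchanged. In the new profile `i` and
  `j` have the same order, so neither has full support, and the allocation is constant in both of
  their utilities (`const_same`). So `j`'s, hence `i`'s, probability of `a` in the original profile
  does not depend on `i`'s utility (`transfer`); by strategy-proofness neither does `i`'s lottery,
  and by non-bossiness neither does the allocation (`const_self`).
-/

open Finset Filter Topology

/-- No ties on degenerate lotteries. -/
def NoTies (u : Fin 3 → ℝ) : Prop := ∀ x y : Fin 3, x ≠ y → u x ≠ u y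

/-- A lottery over three objects. -/
def IsLottery (π : Fin 3 → ℝ) : Prop := (∀ x, 0 ≤ π x) ∧ ∑ x, π x = 1

/-- A 3×3 bistochastic matrix (rows = agents, columns = objects). -/
def Bistochastic (π : Fin 3 → Fin 3 → ℝ) : Prop :=
  (∀ i x, 0 ≤ π i x) ∧ (∀ i, ∑ x, π i x = 1) ∧ (∀ x, ∑ i, π i x = 1)

/-- Expected utility of lottery `π` under Bernoulli utility `u`. -/
def EU (u π : Fin 3 → ℝ) : ℝ := ∑ x, u x * π x

/-- `u` and `v` induce the same strict order on objects. -/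
def SameOrder (u v : Fin 3 → ℝ) : Prop := ∀ x y : Fin 3, u x > u y ↔ v x > v y

def NoTiesProfile (u : Fin 3 → Fin 3 → ℝ) : Prop := ∀ i, NoTies (u i)

/-- Utilities normalized to sum to one. -/
def Normalized (u : Fin 3 → ℝ) : Prop := ∑ x, u x = 1

/-- Rate of middle substitution, for `u a > u b > u c`. -/
noncomputable def mu (u : Fin 3 → ℝ) (a b c : Fin 3) : ℝ := (u b - u c) / (u a - u c)

/-- Effectively the same: same strict order and same rate of middle substitution. -/
def EffSame (u v : Fin 3 → ℝ) : Prop :=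
  SameOrder u v ∧ ∀ a b c : Fin 3, u a > u b → u b > u c → mu u a b c = mu v a b c

/-- The rule maps (no-ties) profiles to bistochastic matrices. -/
def BistochasticValued (φ : (Fin 3 → Fin 3 → ℝ) → Fin 3 → Fin 3 → ℝ) : Prop :=
  ∀ u, NoTiesProfile u → Bistochastic (φ u)

def StrategyProof (φ : (Fin 3 → Fin 3 → ℝ) → Fin 3 → Fin 3 → ℝ) : Prop :=
  ∀ u i ui', NoTiesProfile u → NoTies ui' →
    EU (u i) (φ u i) ≥ EU (u i) (φ (Function.update u i ui') i)

def NonBossy (φ : (Fin 3 → Fin 3 → ℝ) → Fin 3 → Fin 3 → ℝ) : Prop :=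
  ∀ u i ui', NoTiesProfile u → NoTies ui' →
    φ u i = φ (Function.update u i ui') i → φ u = φ (Function.update u i ui')

/-- `π'` Pareto-dominates `π` at `u` in expected utility. -/
def Dominates (u π' π : Fin 3 → Fin 3 → ℝ) : Prop :=
  (∀ j, EU (u j) (π' j) ≥ EU (u j) (π j)) ∧ ∃ i, EU (u i) (π' i) > EU (u i) (π i)

def Efficient (φ : (Fin 3 → Fin 3 → ℝ) → Fin 3 → Fin 3 → ℝ) : Prop :=
  ∀ u, NoTiesProfile u → ¬ ∃ π', Bistochastic π' ∧ Dominates u π' (φ u)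

/-- Normalized-cone-continuity. -/
def NCContinuous (φ : (Fin 3 → Fin 3 → ℝ) → Fin 3 → Fin 3 → ℝ) : Prop :=
  ∀ (u : Fin 3 → Fin 3 → ℝ) (i : Fin 3) (us : ℕ → Fin 3 → ℝ),
    NoTiesProfile u → Normalized (u i) →
    (∀ k, NoTies (us k) ∧ Normalized (us k)) →
    Tendsto us atTop (nhds (u i)) →
    Tendsto (fun k => φ (Function.update u i (us k))) atTop (nhds (φ u))

/-- The standing assumptions on the rule. -/
structure Good (φ : (Fin 3 → Fin 3 → ℝ) → Fin 3 → Fin 3 → ℝ) : Prop where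
  B : BistochasticValued φ
  E : Efficient φ
  S : StrategyProof φ
  N : NonBossy φ
  C : NCContinuous φ

/-- `v` ranks `a` above `b` above `c`. -/
def Ranks (v : Fin 3 → ℝ) (a b c : Fin 3) : Prop := v a > v b ∧ v b > v c

/-- The three labels are distinct. -/
def Distinct (a b c : Fin 3) : Prop := a ≠ b ∧ a ≠ c ∧ b ≠ c

/-- The utility `(1, β, 0)` on `(a, b, c)`, shifted so that it sums to one (the three
labels exhaust the objects, so the third one need not be tested). -/
noncomputable def can (a b _c : Fin 3) (β : ℝ) : Fin 3 → ℝ :=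
  fun x => if x = a then 1 - β / 3 else if x = b then 2 * β / 3 else - β / 3

/-! ### Labels and canonical utilities -/

lemma Distinct.univ_eq {a b c : Fin 3} (h : Distinct a b c) : (Finset.univ : Finset (Fin 3)) = {a, b, c} := by
  unfold Distinct at h
  revert a b c
  decide

lemma Distinct.sum {a b c : Fin 3} (h : Distinct a b c) (f : Fin 3 → ℝ) : ∑ x, f x = f a + f b + f c := by
  rw [h.univ_eq, Finset.sum_insert (by simp [h.1, h.2.1]), Finset.sum_insert (by simp [h.2.2]),
    Finset.sum_singleton, add_assoc]

lemma Distinct.cases {a b c : Fin 3} (h : Distinct a b c) (x : Fin 3) : x = a ∨ x = b ∨ x = c := by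
  have : x ∈ (Finset.univ : Finset (Fin 3)) := Finset.mem_univ x
  rw [h.univ_eq] at this
  simpa using this

lemma exists_third {i j : Fin 3} (h : i ≠ j) : ∃ k, Distinct i j k := by
  unfold Distinct
  revert i j
  decide

lemma Ranks.dist {v : Fin 3 → ℝ} {a b c : Fin 3} (h : Ranks v a b c) : Distinct a b c := by
  obtain ⟨h1, h2⟩ := h
  refine ⟨?_, ?_, ?_⟩ <;> rintro rfl <;> linarith

lemma Ranks.noTies {v : Fin 3 → ℝ} {a b c : Fin 3} (h : Ranks v a b c) : NoTies v := by
  have hd := h.dist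
  obtain ⟨h1, h2⟩ := h
  intro x y hxy he
  rcases hd.cases x with rfl | rfl | rfl <;> rcases hd.cases y with rfl | rfl | rfl <;>
    first | exact hxy rfl | linarith

lemma exists_ord {v : Fin 3 → ℝ} (h : NoTies v) : ∃ a b c, Ranks v a b c := by
  have h01 := h 0 1 (by decide)
  have h02 := h 0 2 (by decide)
  have h12 := h 1 2 (by decide)
  unfold Ranks
  rcases lt_or_gt_of_ne h01 with h01 | h01 <;> rcases lt_or_gt_of_ne h02 with h02 | h02 <;>
    rcases lt_or_gt_of_ne h12 with h12 | h12
  · exact ⟨2, 1, 0, h12, h01⟩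
  · exact ⟨1, 2, 0, h12, h02⟩
  · linarith
  · exact ⟨1, 0, 2, h01, h02⟩
  · exact ⟨2, 0, 1, h02, h01⟩
  · linarith
  · exact ⟨0, 2, 1, h02, h12⟩
  · exact ⟨0, 1, 2, h01, h12⟩

lemma can_a {a b c : Fin 3} (β : ℝ) : can a b c β a = 1 - β / 3 := by simp [can]

lemma can_b {a b c : Fin 3} (h : Distinct a b c) (β : ℝ) : can a b c β b = 2 * β / 3 := by
  simp [can, h.1.symm]

lemma can_c {a b c : Fin 3} (h : Distinct a b c) (β : ℝ) : can a b c β c = - β / 3 := by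
  simp [can, h.2.1.symm, h.2.2.symm]

lemma can_ord {a b c : Fin 3} (h : Distinct a b c) {β : ℝ} (hβ : β ∈ Set.Ioo (0 : ℝ) 1) :
    Ranks (can a b c β) a b c := by
  obtain ⟨h0, h1⟩ := hβ
  unfold Ranks
  rw [can_a, can_b h, can_c h]
  constructor <;> linarith

lemma can_norm {a b c : Fin 3} (h : Distinct a b c) (β : ℝ) : Normalized (can a b c β) := by
  unfold Normalized
  rw [h.sum, can_a, can_b h, can_c h]
  ring

/-- The middle value of `v` after normalizing its extreme values to `1` and `0`. -/
noncomputable def mid (v : Fin 3 → ℝ) (a b c : Fin 3) : ℝ := (v b - v c) / (v a - v c)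

lemma mid_mem {v : Fin 3 → ℝ} {a b c : Fin 3} (h : Ranks v a b c) :
    mid v a b c ∈ Set.Ioo (0 : ℝ) 1 := by
  obtain ⟨h1, h2⟩ := h
  have h3 : 0 < v a - v c := by linarith
  refine ⟨div_pos (by linarith) h3, ?_⟩
  unfold mid
  rw [div_lt_one h3]
  linarith

lemma mid_can {a b c : Fin 3} (h : Distinct a b c) (β : ℝ) : mid (can a b c β) a b c = β := by
  unfold mid
  rw [can_a, can_b h, can_c h]
  ring

/-- For lotteries, expected-utility comparisons depend on `v` only through its middle value. -/
lemma EU_le {v : Fin 3 → ℝ} {a b c : Fin 3} (h : Ranks v a b c) {p q : Fin 3 → ℝ}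
    (hp : ∑ x, p x = 1) (hq : ∑ x, q x = 1) (hpq : EU v p ≥ EU v q) :
    q a + mid v a b c * q b ≤ p a + mid v a b c * p b := by
  have hd := h.dist
  obtain ⟨h1, h2⟩ := h
  have h3 : 0 < v a - v c := by linarith
  unfold EU at hpq
  rw [hd.sum] at hp hq
  rw [hd.sum, hd.sum] at hpq
  have e : mid v a b c * (v a - v c) = v b - v c := by
    unfold mid
    field_simp
  have hpc : p c = 1 - p a - p b := by linarith
  have hqc : q c = 1 - q a - q b := by linarith
  rw [hpc, hqc] at hpq
  refine le_of_mul_le_mul_right ?_ h3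
  have e1 : (q a + mid v a b c * q b) * (v a - v c) = q a * (v a - v c) + q b * (v b - v c) := by
    rw [← e]; ring
  have e2 : (p a + mid v a b c * p b) * (v a - v c) = p a * (v a - v c) + p b * (v b - v c) := by
    rw [← e]; ring
  rw [e1, e2]
  linarith

/-! ### Consequences of the axioms -/

lemma noTies_update {u : Fin 3 → Fin 3 → ℝ} (hu : NoTiesProfile u) (l : Fin 3) {v : Fin 3 → ℝ}
    (hv : NoTies v) : NoTiesProfile (Function.update u l v) := by
  intro m
  by_cases h : m = l
  · subst h; simpa using hv
  · simpa [h] using hu m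

section
variable {φ : (Fin 3 → Fin 3 → ℝ) → Fin 3 → Fin 3 → ℝ}

/-- Strategy-proofness for two reports inducing the same order, in normalized form. -/
lemma Good.sp (G : Good φ) {u : Fin 3 → Fin 3 → ℝ} (hu : NoTiesProfile u) (l : Fin 3)
    {v w : Fin 3 → ℝ} {a b c : Fin 3} (hv : Ranks v a b c) (hw : NoTies w) :
    φ (Function.update u l w) l a + mid v a b c * φ (Function.update u l w) l b ≤
      φ (Function.update u l v) l a + mid v a b c * φ (Function.update u l v) l b := by
  have h := G.S (Function.update u l v) l w (noTies_update hu l hv.noTies) hw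
  rw [Function.update_idem, Function.update_self] at h
  exact EU_le hv ((G.B _ (noTies_update hu l hv.noTies)).2.1 l)
    ((G.B _ (noTies_update hu l hw)).2.1 l) h

lemma Good.nb (G : Good φ) {u : Fin 3 → Fin 3 → ℝ} (hu : NoTiesProfile u) (l : Fin 3)
    {v w : Fin 3 → ℝ} (hv : NoTies v) (hw : NoTies w)
    (h : φ (Function.update u l v) l = φ (Function.update u l w) l) :
    φ (Function.update u l v) = φ (Function.update u l w) := by
  have h' := G.N (Function.update u l v) l w (noTies_update hu l hv) hw
  rw [Function.update_idem] at h'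
  exact h' h

lemma Good.row (G : Good φ) {u : Fin 3 → Fin 3 → ℝ} (hu : NoTiesProfile u) {a b c : Fin 3}
    (h : Distinct a b c) (l : Fin 3) : φ u l a + φ u l b + φ u l c = 1 := by
  rw [← h.sum (φ u l)]
  exact (G.B u hu).2.1 l

lemma Good.col (G : Good φ) {u : Fin 3 → Fin 3 → ℝ} (hu : NoTiesProfile u) {i j k : Fin 3}
    (h : Distinct i j k) (x : Fin 3) : φ u i x + φ u j x + φ u k x = 1 := by
  rw [← h.sum (fun m => φ u m x)]
  exact (G.B u hu).2.2 x

lemma Good.nonneg (G : Good φ) {u : Fin 3 → Fin 3 → ℝ} (hu : NoTiesProfile u) (l x : Fin 3) :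
    0 ≤ φ u l x := (G.B u hu).1 l x

lemma Good.eq_zero (G : Good φ) {u : Fin 3 → Fin 3 → ℝ} (hu : NoTiesProfile u) {l x : Fin 3}
    (h : ¬ 0 < φ u l x) : φ u l x = 0 :=
  le_antisymm (not_lt.1 h) (G.nonneg hu l x)

/-- Equality of two lotteries of the same agent follows from equality at two objects. -/
lemma Good.row_ext (G : Good φ) {u u' : Fin 3 → Fin 3 → ℝ} (hu : NoTiesProfile u)
    (hu' : NoTiesProfile u') {a b c : Fin 3} (h : Distinct a b c) (l : Fin 3)
    (ha : φ u l a = φ u' l a) (hb : φ u l b = φ u' l b) : φ u l = φ u' l := by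
  have h1 := G.row hu h l
  have h2 := G.row hu' h l
  funext x
  rcases h.cases x with rfl | rfl | rfl
  · exact ha
  · exact hb
  · linarith

lemma Good.cont (G : Good φ) {u : Fin 3 → Fin 3 → ℝ} (hu : NoTiesProfile u) (l : Fin 3)
    {a b c : Fin 3} (h : Distinct a b c) {β : ℝ} (hβ : β ∈ Set.Ioo (0 : ℝ) 1) :
    ContinuousAt (fun β => φ (Function.update u l (can a b c β))) β := by
  apply tendsto_of_seq_tendsto
  intro x hx
  classical
  -- Terms outside the open interval, finitely many, are replaced by the limit.
  set y : ℕ → ℝ := fun n => if x n ∈ Set.Ioo (0 : ℝ) 1 then x n else β with hy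
  have hxI : ∀ᶠ n in atTop, x n ∈ Set.Ioo (0 : ℝ) 1 := hx (isOpen_Ioo.mem_nhds hβ)
  have hxy : ∀ᶠ n in atTop, x n = y n := by
    filter_upwards [hxI] with n hn
    simp only [hy, if_pos hn]
  have hyI : ∀ n, y n ∈ Set.Ioo (0 : ℝ) 1 := by
    intro n
    simp only [hy]
    split_ifs with h'
    · exact h'
    · exact hβ
  have hyt : Tendsto y atTop (𝓝 β) := hx.congr' hxy
  have hcan : Continuous (can a b c) := by
    apply continuous_pi
    intro z
    unfold can
    split_ifs <;> fun_prop
  have key := G.C (Function.update u l (can a b c β)) l (fun n => can a b c (y n))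
    (noTies_update hu l (can_ord h hβ).noTies) (by simpa using can_norm h β)
    (fun n => ⟨(can_ord h (hyI n)).noTies, can_norm h _⟩)
    (by simpa [Function.comp_def] using (hcan.tendsto β).comp hyt)
  simp only [Function.update_idem] at key
  refine key.congr' ?_
  filter_upwards [hxy] with n hn
  simp only [Function.comp, hn]

/-- Positive entries stay positive nearby on a canonical path. -/
lemma Good.pos_near (G : Good φ) {u : Fin 3 → Fin 3 → ℝ} (hu : NoTiesProfile u) (l : Fin 3)
    {a b c : Fin 3} (h : Distinct a b c) {β : ℝ} (hβ : β ∈ Set.Ioo (0 : ℝ) 1) :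
    ∀ᶠ β' in 𝓝 β, ∀ m x, 0 < φ (Function.update u l (can a b c β)) m x →
      0 < φ (Function.update u l (can a b c β')) m x := by
  rw [eventually_all]
  intro m
  rw [eventually_all]
  intro x
  by_cases hp : 0 < φ (Function.update u l (can a b c β)) m x
  · have hc : ContinuousAt (fun β => φ (Function.update u l (can a b c β)) m x) β :=
      continuousAt_pi.1 (continuousAt_pi.1 (G.cont hu l h hβ) m) x
    filter_upwards [hc.eventually_const_lt hp] with β' hβ' _ using hβ'
  · exact Eventually.of_forall fun _ h' => absurd h' hp

/-- The rule does not change when a utility is replaced by its canonical form: the middle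
probability is monotone in the middle value, so it is squeezed at the common middle value by its
one-sided limits along the canonical path. -/
lemma Good.can_eq (G : Good φ) {u : Fin 3 → Fin 3 → ℝ} (hu : NoTiesProfile u) (l : Fin 3)
    {v : Fin 3 → ℝ} {a b c : Fin 3} (hv : Ranks v a b c) :
    φ (Function.update u l (can a b c (mid v a b c))) = φ (Function.update u l v) := by
  have hd := hv.dist
  set μ := mid v a b c with hμ
  have hμI : μ ∈ Set.Ioo (0 : ℝ) 1 := mid_mem hv
  have hcb : ContinuousAt (fun β => φ (Function.update u l (can a b c β)) l b) μ :=
    continuousAt_pi.1 (continuousAt_pi.1 (G.cont hu l hd hμI) l) b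
  have hmono : ∀ β ∈ Set.Ioo (0 : ℝ) 1, 0 ≤ (β - μ) *
      (φ (Function.update u l (can a b c β)) l b - φ (Function.update u l v) l b) := by
    intro β hβ
    have h1 := G.sp hu l hv (can_ord hd hβ).noTies
    have h2 := G.sp hu l (can_ord hd hβ) hv.noTies
    rw [mid_can hd] at h2
    rw [← hμ] at h1
    linarith
  have hI : ∀ᶠ β in 𝓝 μ, β ∈ Set.Ioo (0 : ℝ) 1 := isOpen_Ioo.mem_nhds hμI
  have hge : φ (Function.update u l v) l b ≤ φ (Function.update u l (can a b c μ)) l b := by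
    refine ge_of_tendsto (hcb.tendsto.mono_left (nhdsWithin_le_nhds (s := Set.Ioi μ))) ?_
    filter_upwards [hI.filter_mono nhdsWithin_le_nhds, self_mem_nhdsWithin] with β h1 h2
    have h3 : 0 < β - μ := sub_pos.2 h2
    have := nonneg_of_mul_nonneg_right (hmono β h1) h3
    linarith
  have hle : φ (Function.update u l (can a b c μ)) l b ≤ φ (Function.update u l v) l b := by
    refine le_of_tendsto (hcb.tendsto.mono_left (nhdsWithin_le_nhds (s := Set.Iio μ))) ?_
    filter_upwards [hI.filter_mono nhdsWithin_le_nhds, self_mem_nhdsWithin] with β h1 h2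
    have h3 : β - μ < 0 := sub_neg.2 h2
    by_contra! h4
    have := mul_neg_of_neg_of_pos h3 (sub_pos.2 h4)
    linarith [hmono β h1]
  have hb := le_antisymm hle hge
  have h1 := G.sp hu l hv (can_ord hd hμI).noTies
  have h2 := G.sp hu l (can_ord hd hμI) hv.noTies
  rw [mid_can hd, hb] at h2
  rw [← hμ, hb] at h1
  have hcn := (can_ord hd hμI).noTies
  exact G.nb hu l hcn hv.noTies (G.row_ext (noTies_update hu l hcn)
    (noTies_update hu l hv.noTies) hd l (by linarith) hb)

lemma Good.exists_can (G : Good φ) {u : Fin 3 → Fin 3 → ℝ} (hu : NoTiesProfile u) {l : Fin 3}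
    {a b c : Fin 3} (hl : Ranks (u l) a b c) :
    ∃ β ∈ Set.Ioo (0 : ℝ) 1, φ (Function.update u l (can a b c β)) = φ u := by
  refine ⟨_, mid_mem hl, ?_⟩
  rw [G.can_eq hu l hl, Function.update_eq_self]

/-- If two reports with the same order both give the agent zero probability of `r`, the
allocations coincide. -/
lemma Good.edge (G : Good φ) {u : Fin 3 → Fin 3 → ℝ} (hu : NoTiesProfile u) (l : Fin 3)
    {v w : Fin 3 → ℝ} {a b c : Fin 3} (hv : Ranks v a b c) (hw : Ranks w a b c) {r : Fin 3}
    (hrv : φ (Function.update u l v) l r = 0) (hrw : φ (Function.update u l w) l r = 0) :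
    φ (Function.update u l v) = φ (Function.update u l w) := by
  have hd := hv.dist
  have h1 := G.sp hu l hv hw.noTies
  have h2 := G.sp hu l hw hv.noTies
  obtain ⟨m0, m1⟩ := mid_mem hv
  obtain ⟨n0, n1⟩ := mid_mem hw
  have r1 := G.row (noTies_update hu l hv.noTies) hd l
  have r2 := G.row (noTies_update hu l hw.noTies) hd l
  apply G.nb hu l hv.noTies hw.noTies
  have key : φ (Function.update u l v) l a = φ (Function.update u l w) l a ∧
      φ (Function.update u l v) l b = φ (Function.update u l w) l b := by
    rcases hd.cases r with rfl | rfl | rfl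
    · rw [hrv, hrw] at h1 h2 ⊢
      refine ⟨rfl, le_antisymm ?_ ?_⟩
      · exact le_of_mul_le_mul_left (by linarith) n0
      · exact le_of_mul_le_mul_left (by linarith) m0
    · rw [hrv, hrw] at h1 h2 ⊢
      exact ⟨by linarith, rfl⟩
    · have e1 : φ (Function.update u l v) l b = 1 - φ (Function.update u l v) l a := by linarith
      have e2 : φ (Function.update u l w) l b = 1 - φ (Function.update u l w) l a := by linarith
      rw [e1, e2] at h1 h2
      have ha : φ (Function.update u l v) l a = φ (Function.update u l w) l a := by
        apply le_antisymm
        · exact le_of_mul_le_mul_left (by linarith) (sub_pos.2 n1)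
        · exact le_of_mul_le_mul_left (by linarith) (sub_pos.2 m1)
      exact ⟨ha, by linarith⟩
  exact G.row_ext (noTies_update hu l hv.noTies) (noTies_update hu l hw.noTies) hd l key.1 key.2

/-! ### Constancy along paths -/

/-- Open-closed argument on an interval of canonical utilities. -/
lemma Good.const_on (G : Good φ) {u : Fin 3 → Fin 3 → ℝ} (hu : NoTiesProfile u) (l : Fin 3)
    {a b c : Fin 3} (h : Distinct a b c) {s t β₀ : ℝ} (hs : 0 ≤ s) (ht : t ≤ 1)
    (hβ₀ : β₀ ∈ Set.Ioo s t)
    (H : ∀ β ∈ Set.Ioo s t, (∀ m x, 0 < φ (Function.update u l (can a b c β₀)) m x →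
      0 < φ (Function.update u l (can a b c β)) m x) →
      φ (Function.update u l (can a b c β)) = φ (Function.update u l (can a b c β₀))) :
    ∀ β ∈ Set.Ioo s t,
      φ (Function.update u l (can a b c β)) = φ (Function.update u l (can a b c β₀)) := by
  set F : ℝ → Fin 3 → Fin 3 → ℝ := fun β => φ (Function.update u l (can a b c β)) with hF
  have hI : ∀ β ∈ Set.Ioo s t, β ∈ Set.Ioo (0 : ℝ) 1 := fun β hβ =>
    ⟨lt_of_le_of_lt hs hβ.1, lt_of_lt_of_le hβ.2 ht⟩
  have hopen : ∀ β ∈ Set.Ioo s t, F β = F β₀ → ∀ᶠ β' in 𝓝 β, F β' = F β₀ := by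
    intro β hβ he
    have hp := G.pos_near hu l h (hI β hβ)
    filter_upwards [hp, isOpen_Ioo.mem_nhds hβ] with β' h1 h2
    refine H β' h2 fun m x hm => h1 m x ?_
    have : φ (Function.update u l (can a b c β)) = φ (Function.update u l (can a b c β₀)) := he
    rw [this]
    exact hm
  have hclosed : ∀ β ∈ Set.Ioo s t, F β ≠ F β₀ → ∀ᶠ β' in 𝓝 β, F β' ≠ F β₀ := by
    intro β hβ he
    exact (G.cont hu l h (hI β hβ)).eventually_ne he
  have hU : IsOpen {β | β ∈ Set.Ioo s t ∧ F β = F β₀} := by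
    rw [isOpen_iff_mem_nhds]
    rintro β ⟨hβ, he⟩
    filter_upwards [isOpen_Ioo.mem_nhds hβ, hopen β hβ he] with β' h1 h2 using ⟨h1, h2⟩
  have hV : IsOpen {β | β ∈ Set.Ioo s t ∧ F β ≠ F β₀} := by
    rw [isOpen_iff_mem_nhds]
    rintro β ⟨hβ, he⟩
    filter_upwards [isOpen_Ioo.mem_nhds hβ, hclosed β hβ he] with β' h1 h2 using ⟨h1, h2⟩
  intro β hβ
  by_contra hne
  obtain ⟨γ, -, hγ1, hγ2⟩ := isPreconnected_Ioo _ _ hU hV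
    (fun γ hγ => by
      by_cases hg : F γ = F β₀
      · exact Or.inl ⟨hγ, hg⟩
      · exact Or.inr ⟨hγ, hg⟩)
    ⟨β₀, hβ₀, hβ₀, rfl⟩ ⟨β, hβ, hβ, hne⟩
  exact hγ2.2 hγ1.2

/-- If the allocation is unchanged by every same-order report of `l` that keeps positive entries
positive, it is unchanged by every same-order report of `l`. -/
lemma Good.const_cell (G : Good φ) {u : Fin 3 → Fin 3 → ℝ} (hu : NoTiesProfile u) {l : Fin 3}
    {a b c : Fin 3} (hl : Ranks (u l) a b c)
    (H : ∀ v, Ranks v a b c → (∀ m x, 0 < φ u m x → 0 < φ (Function.update u l v) m x) →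
      φ (Function.update u l v) = φ u) :
    ∀ v, Ranks v a b c → φ (Function.update u l v) = φ u := by
  intro v hv
  have hd := hl.dist
  obtain ⟨β₀, hβ₀, he⟩ := G.exists_can hu hl
  have := G.const_on hu l hd le_rfl le_rfl hβ₀ (fun β hβ hp => by
    rw [he] at hp ⊢
    exact H _ (can_ord hd hβ) hp) _ (mid_mem hv)
  rw [← G.can_eq hu l hv, this, he]

/-- Same as `const_cell`, when a zero entry of `l` stays zero. -/
lemma Good.const_of_zero (G : Good φ) {u : Fin 3 → Fin 3 → ℝ} (hu : NoTiesProfile u) {l : Fin 3}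
    {a b c : Fin 3} (hl : Ranks (u l) a b c) {r : Fin 3} (hr : φ u l r = 0)
    (H : ∀ v, Ranks v a b c → (∀ m x, 0 < φ u m x → 0 < φ (Function.update u l v) m x) →
      φ (Function.update u l v) l r = 0) :
    ∀ v, Ranks v a b c → φ (Function.update u l v) = φ u := by
  refine G.const_cell hu hl fun v hv hp => ?_
  have h1 : φ (Function.update u l (u l)) l r = 0 := by rwa [Function.update_eq_self]
  have := G.edge hu l hv hl (H v hv hp) h1
  rwa [Function.update_eq_self] at this

/-! ### Trades excluded by efficiency -/

/-- Agent `j` cannot receive a multiple of `d` from agent `i` if both gain. -/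
lemma Good.trade (G : Good φ) {u : Fin 3 → Fin 3 → ℝ} (hu : NoTiesProfile u) {i j : Fin 3}
    (hij : i ≠ j) (d : Fin 3 → ℝ) (hd : ∑ x, d x = 0) (hj : ∀ x, d x < 0 → 0 < φ u j x)
    (hi : ∀ x, 0 < d x → 0 < φ u i x) (huj : 0 < ∑ x, u j x * d x)
    (hui : ∑ x, u i x * d x < 0) : False := by
  obtain ⟨k, hk⟩ := exists_third hij
  have hB := G.B u hu
  -- A sufficiently small step of size `t` keeps all entries nonnegative.
  have small : ∀ p e : ℝ, 0 ≤ p → (e < 0 → 0 < p) → ∀ᶠ t in 𝓝[>] (0 : ℝ), 0 ≤ p + t * e := by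
    intro p e hp he
    by_cases h : e < 0
    · have hc : ContinuousAt (fun t : ℝ => p + t * e) 0 := by fun_prop
      have h0 : (0 : ℝ) < p + 0 * e := by simpa using he h
      exact ((hc.eventually_const_lt h0).mono fun t ht => ht.le).filter_mono nhdsWithin_le_nhds
    · filter_upwards [self_mem_nhdsWithin] with t ht
      have : 0 ≤ t * e := mul_nonneg (le_of_lt ht) (not_lt.1 h)
      linarith
  have e1 : ∀ᶠ t in 𝓝[>] (0 : ℝ), ∀ x, 0 ≤ φ u j x + t * d x :=
    eventually_all.2 fun x => small _ _ (hB.1 j x) (hj x)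
  have e2 : ∀ᶠ t in 𝓝[>] (0 : ℝ), ∀ x, 0 ≤ φ u i x + t * (- d x) :=
    eventually_all.2 fun x => small _ _ (hB.1 i x) fun h => hi x (by linarith)
  obtain ⟨t, ⟨h1, h2⟩, ht⟩ := ((e1.and e2).and self_mem_nhdsWithin).exists
  have ht : 0 < t := ht
  have hji := hij.symm
  have hki := hk.2.1.symm
  have hkj := hk.2.2.symm
  set π : Fin 3 → Fin 3 → ℝ := fun m x =>
    if m = i then φ u i x + t * (- d x) else if m = j then φ u j x + t * d x else φ u m x with hπ
  have πi : π i = fun x => φ u i x + t * (- d x) := by funext x; simp [hπ]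
  have πj : π j = fun x => φ u j x + t * d x := by funext x; simp [hπ, hji]
  have πk : π k = φ u k := by funext x; simp [hπ, hki, hkj]
  have Ei : EU (u i) (π i) > EU (u i) (φ u i) := by
    have : EU (u i) (π i) = EU (u i) (φ u i) + (- t) * ∑ x, u i x * d x := by
      rw [πi]; unfold EU
      rw [Finset.mul_sum, ← Finset.sum_add_distrib]
      exact Finset.sum_congr rfl fun x _ => by ring
    rw [this]
    have := mul_pos_of_neg_of_neg (neg_lt_zero.2 ht) hui
    linarith
  have Ej : EU (u j) (π j) > EU (u j) (φ u j) := by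
    have : EU (u j) (π j) = EU (u j) (φ u j) + t * ∑ x, u j x * d x := by
      rw [πj]; unfold EU
      rw [Finset.mul_sum, ← Finset.sum_add_distrib]
      exact Finset.sum_congr rfl fun x _ => by ring
    rw [this]
    have := mul_pos ht huj
    linarith
  refine G.E u hu ⟨π, ⟨?_, ?_, ?_⟩, ?_, i, Ei⟩
  · intro m x
    rcases hk.cases m with rfl | rfl | rfl
    · rw [πi]; exact h2 x
    · rw [πj]; exact h1 x
    · rw [πk]; exact hB.1 _ x
  · intro m
    rcases hk.cases m with rfl | rfl | rfl
    · rw [πi, Finset.sum_add_distrib, hB.2.1, ← Finset.mul_sum, Finset.sum_neg_distrib, hd]; simp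
    · rw [πj, Finset.sum_add_distrib, hB.2.1, ← Finset.mul_sum, hd]; simp
    · rw [πk]; exact hB.2.1 _
  · intro x
    have := G.col hu hk x
    rw [hk.sum, πi, πj, πk]
    linarith
  · intro m
    rcases hk.cases m with rfl | rfl | rfl
    · exact Ei.le
    · exact Ej.le
    · rw [πk]

/-- No mutually beneficial swap of `x` (held by `i`) and `y` (held by `j`). -/
lemma Good.swap (G : Good φ) {u : Fin 3 → Fin 3 → ℝ} (hu : NoTiesProfile u) {i j : Fin 3}
    (hij : i ≠ j) {x y : Fin 3} (hi : 0 < φ u i x) (hj : 0 < φ u j y) (hui : u i x < u i y)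
    (huj : u j y < u j x) : False := by
  have hxy : x ≠ y := by rintro rfl; exact lt_irrefl _ hui
  obtain ⟨z, hz⟩ := exists_third hxy
  obtain ⟨d, dx, dy, dz⟩ : ∃ d : Fin 3 → ℝ, d x = 1 ∧ d y = -1 ∧ d z = 0 :=
    ⟨fun w => if w = x then 1 else if w = y then -1 else 0, by simp, by simp [hxy.symm],
      by simp [hz.2.1.symm, hz.2.2.symm]⟩
  refine G.trade hu hij d ?_ ?_ ?_ ?_ ?_
  · rw [hz.sum, dx, dy, dz]; norm_num
  · intro w hw
    rcases hz.cases w with rfl | rfl | rfl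
    · rw [dx] at hw; linarith
    · exact hj
    · rw [dz] at hw; linarith
  · intro w hw
    rcases hz.cases w with rfl | rfl | rfl
    · exact hi
    · rw [dy] at hw; linarith
    · rw [dz] at hw; linarith
  · rw [hz.sum, dx, dy, dz]; linarith
  · rw [hz.sum, dx, dy, dz]; linarith

/-- Agents `i` (full support) and `j` share the order `a > b > c`. If `j` values `b` relatively
less, `j` does not hold `b`; if relatively more, `j` does not hold both `a` and `c`. The trade
exchanges `b` for the mixture of `a` and `c` whose weight on `a` lies midway between the two middle
values. -/
lemma Good.can_trade (G : Good φ) {u : Fin 3 → Fin 3 → ℝ} (hu : NoTiesProfile u) {i j : Fin 3}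
    (hij : i ≠ j) {a b c : Fin 3} (h : Distinct a b c) {μ ν : ℝ} (hμ : μ ∈ Set.Ioo (0 : ℝ) 1)
    (hν : ν ∈ Set.Ioo (0 : ℝ) 1) (hui : u i = can a b c μ) (huj : u j = can a b c ν)
    (hfull : ∀ x, 0 < φ u i x) :
    (ν < μ → ¬ 0 < φ u j b) ∧ (μ < ν → ¬ (0 < φ u j a ∧ 0 < φ u j c)) := by
  have hm0 : 0 < (μ + ν) / 2 := by linarith [hμ.1, hν.1]
  have hm1 : (μ + ν) / 2 < 1 := by linarith [hμ.2, hν.2]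
  set m := (μ + ν) / 2 with hm
  have hba := h.1.symm
  have hca := h.2.1.symm
  have hcb := h.2.2.symm
  constructor
  · intro hlt hb
    obtain ⟨d, da, db, dc⟩ : ∃ d : Fin 3 → ℝ, d a = m ∧ d b = -1 ∧ d c = 1 - m :=
      ⟨fun w => if w = a then m else if w = b then -1 else 1 - m, by simp, by simp [hba],
        by simp [hca, hcb]⟩
    refine G.trade hu hij d ?_ ?_ (fun x _ => hfull x) ?_ ?_
    · rw [h.sum, da, db, dc]; ring
    · intro w hw
      rcases h.cases w with rfl | rfl | rfl
      · rw [da] at hw; linarith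
      · exact hb
      · rw [dc] at hw; linarith
    · rw [huj, h.sum, da, db, dc, can_a, can_b h, can_c h]; ring_nf; linarith
    · rw [hui, h.sum, da, db, dc, can_a, can_b h, can_c h]; ring_nf; linarith
  · rintro hlt ⟨ha, hc⟩
    obtain ⟨d, da, db, dc⟩ : ∃ d : Fin 3 → ℝ, d a = -m ∧ d b = 1 ∧ d c = -(1 - m) :=
      ⟨fun w => if w = a then -m else if w = b then 1 else -(1 - m), by simp, by simp [hba],
        by simp [hca, hcb]⟩
    refine G.trade hu hij d ?_ ?_ (fun x _ => hfull x) ?_ ?_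
    · rw [h.sum, da, db, dc]; ring
    · intro w hw
      rcases h.cases w with rfl | rfl | rfl
      · exact ha
      · rw [db] at hw; linarith
      · exact hc
    · rw [huj, h.sum, da, db, dc, can_a, can_b h, can_c h]; ring_nf; linarith
    · rw [hui, h.sum, da, db, dc, can_a, can_b h, can_c h]; ring_nf; linarith

/-! ### An agent with full support shares its order with nobody -/

lemma Good.lt_one (G : Good φ) {u : Fin 3 → Fin 3 → ℝ} (hu : NoTiesProfile u) {i j : Fin 3}
    (hij : i ≠ j) {x : Fin 3} (h : 0 < φ u i x) : φ u j x < 1 := by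
  obtain ⟨k, hk⟩ := exists_third hij
  linarith [G.col hu hk x, G.nonneg hu k x]

/-- First case of `no_same`: `j` values `b` less than `i` does. The allocation, with `j` holding
`{a, c}`, would persist when `j`'s middle value passes `i`'s from below. -/
lemma Good.no_same_lt (G : Good φ) {u : Fin 3 → Fin 3 → ℝ} (hu : NoTiesProfile u) {i j : Fin 3}
    (hij : i ≠ j) {a b c : Fin 3} (h : Distinct a b c) {μ ν : ℝ} (hμ : μ ∈ Set.Ioo (0 : ℝ) 1)
    (hν : ν ∈ Set.Ioo (0 : ℝ) 1) (hui : u i = can a b c μ)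
    (hfull : ∀ x, 0 < φ (Function.update u j (can a b c ν)) i x) (hlt : ν < μ) : False := by
  have hnt : ∀ β ∈ Set.Ioo (0 : ℝ) 1, NoTiesProfile (Function.update u j (can a b c β)) :=
    fun β hβ => noTies_update hu j (can_ord h hβ).noTies
  have ct := fun β (hβ : β ∈ Set.Ioo (0 : ℝ) 1) =>
    G.can_trade (hnt β hβ) hij h hμ hβ (by simpa [hij] using hui) (by simp)
  have hb0 := G.eq_zero (hnt ν hν) ((ct ν hν hfull).1 hlt)
  have ha : 0 < φ (Function.update u j (can a b c ν)) j a := by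
    linarith [G.row (hnt ν hν) h j, G.lt_one (hnt ν hν) hij (hfull c)]
  have hc : 0 < φ (Function.update u j (can a b c ν)) j c := by
    linarith [G.row (hnt ν hν) h j, G.lt_one (hnt ν hν) hij (hfull a)]
  have hconst := G.const_on hu j h le_rfl hμ.2.le (β₀ := ν) ⟨hν.1, hlt⟩ (fun β hβ hp => by
    have hβI : β ∈ Set.Ioo (0 : ℝ) 1 := ⟨hβ.1, hβ.2.trans hμ.2⟩
    exact G.edge hu j (can_ord h hβI) (can_ord h hν)
      (G.eq_zero (hnt β hβI) ((ct β hβI fun x => hp i x (hfull x)).1 hβ.2)) hb0)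
  have hat : φ (Function.update u j (can a b c μ)) = φ (Function.update u j (can a b c ν)) := by
    have hcont := (G.cont hu j h hμ).tendsto.mono_left (nhdsWithin_le_nhds (s := Set.Iio μ))
    refine tendsto_nhds_unique hcont (tendsto_const_nhds.congr' ?_)
    filter_upwards [Ioo_mem_nhdsLT hμ.1] with β hβ using (hconst β hβ).symm
  have hev := (G.pos_near hu j h hμ).filter_mono (nhdsWithin_le_nhds (s := Set.Ioi μ))
  obtain ⟨β, hp, hβ⟩ := (hev.and (Ioo_mem_nhdsGT hμ.2)).exists
  rw [hat] at hp
  have hβI : β ∈ Set.Ioo (0 : ℝ) 1 := ⟨hμ.1.trans hβ.1, hβ.2⟩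
  exact (ct β hβI fun x => hp i x (hfull x)).2 hβ.1 ⟨hp j a ha, hp j c hc⟩

/-- Second case of `no_same`: `j` values `b` more than `i` does. The allocation, with `j` holding
`b`, would persist when `j`'s middle value passes `i`'s from above. -/
lemma Good.no_same_gt (G : Good φ) {u : Fin 3 → Fin 3 → ℝ} (hu : NoTiesProfile u) {i j : Fin 3}
    (hij : i ≠ j) {a b c : Fin 3} (h : Distinct a b c) {μ ν : ℝ} (hμ : μ ∈ Set.Ioo (0 : ℝ) 1)
    (hν : ν ∈ Set.Ioo (0 : ℝ) 1) (hui : u i = can a b c μ)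
    (hfull : ∀ x, 0 < φ (Function.update u j (can a b c ν)) i x) (hlt : μ < ν) : False := by
  have hnt : ∀ β ∈ Set.Ioo (0 : ℝ) 1, NoTiesProfile (Function.update u j (can a b c β)) :=
    fun β hβ => noTies_update hu j (can_ord h hβ).noTies
  have ct := fun β (hβ : β ∈ Set.Ioo (0 : ℝ) 1) =>
    G.can_trade (hnt β hβ) hij h hμ hβ (by simpa [hij] using hui) (by simp)
  have hrow := G.row (hnt ν hν) h j
  -- `r` is whichever of `a`, `c` agent `j` does not hold.
  obtain ⟨r, hr0, hr⟩ : ∃ r, φ (Function.update u j (can a b c ν)) j r = 0 ∧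
      ∀ β ∈ Set.Ioo μ 1, (∀ m x, 0 < φ (Function.update u j (can a b c ν)) m x →
        0 < φ (Function.update u j (can a b c β)) m x) →
        φ (Function.update u j (can a b c β)) j r = 0 := by
    have hI : ∀ β ∈ Set.Ioo μ 1, β ∈ Set.Ioo (0 : ℝ) 1 := fun β hβ => ⟨hμ.1.trans hβ.1, hβ.2⟩
    by_cases ha : 0 < φ (Function.update u j (can a b c ν)) j a
    · refine ⟨c, G.eq_zero (hnt ν hν) fun hc => (ct ν hν hfull).2 hlt ⟨ha, hc⟩, ?_⟩
      intro β hβ hp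
      exact G.eq_zero (hnt β (hI β hβ)) fun hc =>
        (ct β (hI β hβ) fun x => hp i x (hfull x)).2 hβ.1 ⟨hp j a ha, hc⟩
    · have ha0 := G.eq_zero (hnt ν hν) ha
      have hc : 0 < φ (Function.update u j (can a b c ν)) j c := by
        linarith [G.lt_one (hnt ν hν) hij (hfull b)]
      refine ⟨a, ha0, ?_⟩
      intro β hβ hp
      exact G.eq_zero (hnt β (hI β hβ)) fun ha' =>
        (ct β (hI β hβ) fun x => hp i x (hfull x)).2 hβ.1 ⟨ha', hp j c hc⟩
  have hb : 0 < φ (Function.update u j (can a b c ν)) j b := by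
    by_contra hb
    have hb0 := G.eq_zero (hnt ν hν) hb
    by_cases ha : 0 < φ (Function.update u j (can a b c ν)) j a
    · have := G.lt_one (hnt ν hν) hij (hfull a)
      exact (ct ν hν hfull).2 hlt ⟨ha, by linarith⟩
    · linarith [G.eq_zero (hnt ν hν) ha, G.lt_one (hnt ν hν) hij (hfull c)]
  have hconst := G.const_on hu j h hμ.1.le le_rfl (β₀ := ν) ⟨hlt, hν.2⟩ (fun β hβ hp => by
    have hβI : β ∈ Set.Ioo (0 : ℝ) 1 := ⟨hμ.1.trans hβ.1, hβ.2⟩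
    exact G.edge hu j (can_ord h hβI) (can_ord h hν) (hr β hβ hp) hr0)
  have hat : φ (Function.update u j (can a b c μ)) = φ (Function.update u j (can a b c ν)) := by
    have hcont := (G.cont hu j h hμ).tendsto.mono_left (nhdsWithin_le_nhds (s := Set.Ioi μ))
    refine tendsto_nhds_unique hcont (tendsto_const_nhds.congr' ?_)
    filter_upwards [Ioo_mem_nhdsGT hμ.2] with β hβ using (hconst β hβ).symm
  have hev := (G.pos_near hu j h hμ).filter_mono (nhdsWithin_le_nhds (s := Set.Iio μ))
  obtain ⟨β, hp, hβ⟩ := (hev.and (Ioo_mem_nhdsLT hμ.1)).exists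
  rw [hat] at hp
  have hβI : β ∈ Set.Ioo (0 : ℝ) 1 := ⟨hβ.1, hβ.2.trans hμ.2⟩
  exact (ct β hβI fun x => hp i x (hfull x)).1 hβ.2 (hp j b hb)

/-- An agent with full support shares its order with nobody. -/
lemma Good.no_same (G : Good φ) {u : Fin 3 → Fin 3 → ℝ} (hu : NoTiesProfile u) {i j : Fin 3}
    (hij : i ≠ j) {a b c : Fin 3} (hi : Ranks (u i) a b c) (hj : Ranks (u j) a b c)
    (hfull : ∀ x, 0 < φ u i x) : False := by
  have h := hi.dist
  obtain ⟨μ, hμ, e1⟩ := G.exists_can hu hi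
  set w := Function.update u i (can a b c μ) with hw
  have hwn : NoTiesProfile w := noTies_update hu i (can_ord h hμ).noTies
  have hwi : w i = can a b c μ := by simp [hw]
  have hwj : Ranks (w j) a b c := by simpa [hw, hij.symm] using hj
  obtain ⟨ν, hν, e2⟩ := G.exists_can hwn hwj
  have hf : ∀ x, 0 < φ (Function.update w j (can a b c ν)) i x := by rwa [e2, e1]
  rcases lt_trichotomy ν μ with hlt | heq | hgt
  · exact G.no_same_lt hwn hij h hμ hν hwi hf hlt
  · -- With equal middle values, a small decrease of that of `j` preserves full support.
    have hev := (G.pos_near hwn j h hν).filter_mono (nhdsWithin_le_nhds (s := Set.Iio ν))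
    obtain ⟨β, hp, hβ⟩ := (hev.and (Ioo_mem_nhdsLT hν.1)).exists
    exact G.no_same_lt hwn hij h hμ ⟨hβ.1, hβ.2.trans hν.2⟩ hwi (fun x => hp i x (hf x))
      (heq ▸ hβ.2)
  · exact G.no_same_gt hwn hij h hμ hν hwi hf hgt

/-- Two agents with full support would agree on every pair of objects, contradicting `no_same`. -/
lemma Good.not_both_full (G : Good φ) {u : Fin 3 → Fin 3 → ℝ} (hu : NoTiesProfile u) {i j : Fin 3}
    (hij : i ≠ j) (hi : ∀ x, 0 < φ u i x) (hj : ∀ x, 0 < φ u j x) : False := by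
  obtain ⟨a, b, c, ho⟩ := exists_ord (hu i)
  have h := ho.dist
  refine G.no_same hu hij ho ⟨?_, ?_⟩ hi
  · by_contra hn
    exact G.swap hu hij (hi b) (hj a) ho.1 (lt_of_le_of_ne (not_lt.1 hn) (hu j a b h.1))
  · by_contra hn
    exact G.swap hu hij (hi c) (hj b) ho.2 (lt_of_le_of_ne (not_lt.1 hn) (hu j b c h.2.2))

/-! ### Moving the other agents -/

/-- An agent facing an agent with full support holds exactly two objects; here: an object it does
not hold, the other two being held. -/
lemma Good.exists_zero (G : Good φ) {u : Fin 3 → Fin 3 → ℝ} (hu : NoTiesProfile u) {i l : Fin 3}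
    (hil : i ≠ l) (hfull : ∀ x, 0 < φ u i x) :
    ∃ r, φ u l r = 0 ∧ ∀ x, x ≠ r → 0 < φ u l x := by
  obtain ⟨r, hr⟩ : ∃ r, ¬ 0 < φ u l r := by
    by_contra! hn
    exact G.not_both_full hu hil hfull hn
  have hr0 := G.eq_zero hu hr
  refine ⟨r, hr0, fun x hx => ?_⟩
  obtain ⟨y, hy⟩ := exists_third hx
  linarith [G.row hu hy l, G.lt_one hu hil (hfull y)]

/-- When agent `i` has full support, another agent's same-order reports change nothing. -/
lemma Good.const_other (G : Good φ) {u : Fin 3 → Fin 3 → ℝ} (hu : NoTiesProfile u) {i l : Fin 3}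
    (hil : i ≠ l) (hfull : ∀ x, 0 < φ u i x) {p q s : Fin 3} (hl : Ranks (u l) p q s) :
    ∀ v, Ranks v p q s → φ (Function.update u l v) = φ u := by
  obtain ⟨r, hr0, hr⟩ := G.exists_zero hu hil hfull
  refine G.const_of_zero hu hl hr0 fun v hv hp => ?_
  have hn := noTies_update hu l hv.noTies
  refine G.eq_zero hn fun hpos => G.not_both_full hn hil (fun x => hp i x (hfull x)) fun x => ?_
  by_cases hx : x = r
  · rw [hx]; exact hpos
  · exact hp l x (hr x hx)

/-- The two possible types of the agents other than the agent `i` with full support. -/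
lemma Good.other_type (G : Good φ) {u : Fin 3 → Fin 3 → ℝ} (hu : NoTiesProfile u) {i l : Fin 3}
    (hil : i ≠ l) {a b c : Fin 3} (hi : Ranks (u i) a b c) (hfull : ∀ x, 0 < φ u i x) :
    (Ranks (u l) a c b ∧ φ u l b = 0 ∧ 0 < φ u l a) ∨
    (u l a < u l b ∧ u l c < u l b ∧ φ u l a = 0 ∧ 0 < φ u l b ∧ 0 < φ u l c) := by
  have h := hi.dist
  obtain ⟨r, hr0, hr⟩ := G.exists_zero hu hil hfull
  -- An object held by `l` is ranked by `l` above everything `i` ranks below it.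
  have key : ∀ x y, 0 < φ u l y → u i x < u i y → u l x < u l y := by
    intro x y hy hlt
    by_contra hn
    have hne : y ≠ x := by rintro rfl; exact lt_irrefl _ hlt
    exact G.swap hu hil (hfull x) hy hlt (lt_of_le_of_ne (not_lt.1 hn) (hu l y x hne))
  have hac : u i c < u i a := hi.2.trans hi.1
  have hno : ¬ Ranks (u l) a b c := fun ho => G.no_same hu hil hi ho hfull
  rcases h.cases r with rfl | rfl | rfl
  · right
    have hb := hr b h.1.symm
    have hcb := key c b hb hi.2
    refine ⟨?_, hcb, hr0, hb, hr c h.2.1.symm⟩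
    by_contra hn
    exact hno ⟨lt_of_le_of_ne (not_lt.1 hn) (hu l b r h.1.symm), hcb⟩
  · left
    have ha := hr a h.1
    have hba := key r a ha hi.1
    refine ⟨⟨key c a ha hac, ?_⟩, hr0, ha⟩
    by_contra hn
    exact hno ⟨hba, lt_of_le_of_ne (not_lt.1 hn) (hu l c r h.2.2.symm)⟩
  · exact absurd ⟨key b a (hr a h.2.1) hi.1, key r b (hr b h.2.2) hi.2⟩ hno

/-! ### Moving the agent with full support -/

/-- If two agents share the order `a > b > c` and one of them gets `a` with probability strictly
between `0` and `1`, its same-order reports change nothing. -/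
lemma Good.const_same (G : Good φ) {u : Fin 3 → Fin 3 → ℝ} (hu : NoTiesProfile u) {l m : Fin 3}
    (hlm : l ≠ m) {a b c : Fin 3} (hl : Ranks (u l) a b c) (hm : Ranks (u m) a b c)
    (h0 : 0 < φ u l a) (h1 : φ u l a < 1) :
    ∀ v, Ranks v a b c → φ (Function.update u l v) = φ u := by
  have h := hl.dist
  have hrow := G.row hu h l
  have nf : ∀ v, Ranks v a b c → ¬ ∀ x, 0 < φ (Function.update u l v) l x := fun v hv hf =>
    G.no_same (noTies_update hu l hv.noTies) hlm (by simpa using hv)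
      (by simpa [hlm.symm] using hm) hf
  have nf0 : ¬ ∀ x, 0 < φ u l x := fun hf => G.no_same hu hlm hl hm hf
  by_cases hb : 0 < φ u l b
  · have full : ∀ w : Fin 3 → Fin 3 → ℝ, 0 < φ w l a → 0 < φ w l b → 0 < φ w l c →
        ∀ x, 0 < φ w l x := by
      intro w ha hb hc x
      rcases h.cases x with rfl | rfl | rfl <;> assumption
    refine G.const_of_zero hu hl (r := c) (G.eq_zero hu fun hc => nf0 (full u h0 hb hc)) ?_
    intro v hv hp
    exact G.eq_zero (noTies_update hu l hv.noTies) fun hc =>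
      nf v hv (full _ (hp l a h0) (hp l b hb) hc)
  · have hb0 := G.eq_zero hu hb
    have hc : 0 < φ u l c := by linarith
    refine G.const_of_zero hu hl hb0 ?_
    intro v hv hp
    refine G.eq_zero (noTies_update hu l hv.noTies) fun hb' => nf v hv fun x => ?_
    rcases h.cases x with rfl | rfl | rfl
    · exact hp l _ h0
    · exact hb'
    · exact hp l _ hc

/-- Agent `i` has full support and order `a > b > c`, agent `j` has order `a > c > b`. When `j`
switches to `a > b > c`, its probability of `a` is unchanged, whatever the utilities of `i` and `j`
are within their orders. -/
lemma Good.transfer (G : Good φ) {u : Fin 3 → Fin 3 → ℝ} (hu : NoTiesProfile u) {i j k : Fin 3}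
    (hd : Distinct i j k) {a b c : Fin 3} (hi : Ranks (u i) a b c) (hj : Ranks (u j) a c b)
    (hka : u k a < u k b) (hfull : ∀ x, 0 < φ u i x)
    (hjb : φ u j b = 0) (hja : 0 < φ u j a) {v w : Fin 3 → ℝ} (hv : Ranks v a b c)
    (hw : Ranks w a b c) :
    φ (Function.update (Function.update u i v) j w) j a = φ u j a := by
  have h := hi.dist
  have h' := hj.dist
  have hij : i ≠ j := hd.1
  have hji := hij.symm
  set α := φ u j a with hα
  have hα1 : α < 1 := G.lt_one hu hij (hfull a)
  have hjc : φ u j c = 1 - α := by linarith [G.row hu h j]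
  have hnt : ∀ w, Ranks w a b c → NoTiesProfile (Function.update u j w) := fun w hw =>
    noTies_update hu j hw.noTies
  -- At an almost-tie of `c` with `b`, the order `a > c > b` does not gain from `w`.
  have up : ∀ w, Ranks w a b c → φ (Function.update u j w) j a ≤ α := by
    intro w hw
    refine le_of_forall_pos_le_add fun δ hδ => ?_
    have hI : min δ (1 / 2) ∈ Set.Ioo (0 : ℝ) 1 :=
      ⟨lt_min hδ (by norm_num), lt_of_le_of_lt (min_le_right _ _) (by norm_num)⟩
    have hs := G.sp hu j (can_ord h' hI) hw.noTies
    rw [G.const_other hu hij hfull hj _ (can_ord h' hI), mid_can h', ← hα, hjc] at hs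
    have h1 : 0 ≤ min δ (1 / 2) * φ (Function.update u j w) j c :=
      mul_nonneg hI.1.le (G.nonneg (hnt w hw) j c)
    have h2 : min δ (1 / 2) * (1 - α) ≤ min δ (1 / 2) * 1 :=
      mul_le_mul_of_nonneg_left (by linarith) hI.1.le
    linarith [min_le_left δ (1 / 2)]
  have low : ∀ ε ∈ Set.Ioo (0 : ℝ) 1,
      α - ε ≤ φ (Function.update u j (can a b c ε)) j a := by
    intro ε hε
    have hs := G.sp hu j (can_ord h hε) (hu j)
    rw [Function.update_eq_self, mid_can h, ← hα, hjb] at hs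
    have hn := hnt _ (can_ord h hε)
    have hb1 : φ (Function.update u j (can a b c ε)) j b ≤ 1 := by
      linarith [G.row hn h j, G.nonneg hn j a, G.nonneg hn j c]
    have := mul_le_mul_of_nonneg_left hb1 hε.1.le
    linarith
  have hε₀ : α / 2 ∈ Set.Ioo (0 : ℝ) 1 := ⟨by linarith, by linarith⟩
  set u₀ := Function.update u j (can a b c (α / 2)) with hu₀
  have hn₀ : NoTiesProfile u₀ := hnt _ (can_ord h hε₀)
  have hj₀ : Ranks (u₀ j) a b c := by simpa [hu₀] using can_ord h hε₀
  have hi₀ : Ranks (u₀ i) a b c := by simpa [hu₀, hij] using hi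
  have p0 : 0 < φ u₀ j a := by linarith [low _ hε₀]
  have p1 : φ u₀ j a < 1 := lt_of_le_of_lt (up _ (can_ord h hε₀)) hα1
  have hc₀ : ∀ w, Ranks w a b c → φ (Function.update u j w) = φ u₀ := by
    intro w hw
    have := G.const_same hn₀ hji hj₀ hi₀ p0 p1 w hw
    rwa [hu₀, Function.update_idem, ← hu₀] at this
  have hx : φ u₀ j a = α := by
    refine le_antisymm (up _ (can_ord h hε₀)) (le_of_forall_pos_le_add fun δ hδ => ?_)
    have hI : min δ (1 / 2) ∈ Set.Ioo (0 : ℝ) 1 :=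
      ⟨lt_min hδ (by norm_num), lt_of_le_of_lt (min_le_right _ _) (by norm_num)⟩
    have := low _ hI
    rw [hc₀ _ (can_ord h hI)] at this
    linarith [min_le_left δ (1 / 2)]
  -- Agent `k` gets no `a`: otherwise neither `i` nor `j` holds `b`, so `k` holds only `b`.
  have hk0 : φ u₀ k a = 0 := by
    refine G.eq_zero hn₀ fun hk => ?_
    have hk₀ : u₀ k a < u₀ k b := by simpa [hu₀, hd.2.2.symm] using hka
    have hib : φ u₀ i b = 0 := G.eq_zero hn₀ fun hb => G.swap hn₀ hd.2.1 hb hk hi₀.1 hk₀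
    have hjb : φ u₀ j b = 0 := G.eq_zero hn₀ fun hb => G.swap hn₀ hd.2.2 hb hk hj₀.1 hk₀
    linarith [G.col hn₀ hd b, G.row hn₀ h k, G.nonneg hn₀ k c]
  have hia : φ u₀ i a = 1 - α := by linarith [G.col hn₀ hd a]
  have hcw := hc₀ w hw
  have hfin := G.const_same (u := Function.update u j w) (hnt w hw) hij (a := a) (b := b) (c := c)
    (by simpa [hij] using hi) (by simpa using hw) (by rw [hcw, hia]; linarith)
    (by rw [hcw, hia]; linarith) v hv
  rw [Function.update_comm hij, hfin, hcw, hx]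

/-- The allocation does not depend on the utility, within its order, of the agent with full
support. -/
lemma Good.const_self (G : Good φ) {u : Fin 3 → Fin 3 → ℝ} (hu : NoTiesProfile u) {i j k : Fin 3}
    (hd : Distinct i j k) {a b c : Fin 3} (hi : Ranks (u i) a b c) (hj : Ranks (u j) a c b)
    (hka : u k a < u k b) (hfull : ∀ x, 0 < φ u i x) :
    ∀ v, Ranks v a b c → φ (Function.update u i v) = φ u := by
  have h := hi.dist
  have hij : i ≠ j := hd.1
  have hik : i ≠ k := hd.2.1
  have types : ∀ w : Fin 3 → Fin 3 → ℝ, NoTiesProfile w → Ranks (w i) a b c → Ranks (w j) a c b →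
      w k a < w k b → (∀ x, 0 < φ w i x) → φ w j b = 0 ∧ 0 < φ w j a ∧ φ w k a = 0 := by
    intro w hw hi hj hka hf
    rcases G.other_type hw hij hi hf with h1 | h1
    · rcases G.other_type hw hik hi hf with h2 | h2
      · have := h2.1.1.trans' h2.1.2
        linarith
      · exact ⟨h1.2.1, h1.2.2, h2.2.2.1⟩
    · have := hj.1.trans' hj.2
      linarith [h1.1]
  refine G.const_cell hu hi fun v hv hp => ?_
  set u₁ := Function.update u i v with hu₁
  have hn₁ : NoTiesProfile u₁ := noTies_update hu i hv.noTies
  have hf₁ : ∀ x, 0 < φ u₁ i x := fun x => hp i x (hfull x)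
  have hi₁ : Ranks (u₁ i) a b c := by simpa [hu₁] using hv
  have hj₁ : Ranks (u₁ j) a c b := by simpa [hu₁, hij.symm] using hj
  have hk₁ : u₁ k a < u₁ k b := by simpa [hu₁, hik.symm] using hka
  obtain ⟨x1, x2, x3⟩ := types u hu hi hj hka hfull
  obtain ⟨y1, y2, y3⟩ := types u₁ hn₁ hi₁ hj₁ hk₁ hf₁
  have t1 := G.transfer hu hd hi hj hka hfull x1 x2 hi hi
  have t2 := G.transfer hn₁ hd hi₁ hj₁ hk₁ hf₁ y1 y2 hi hi
  rw [hu₁, Function.update_idem, t1, ← hu₁] at t2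
  have ha : φ u₁ i a = φ u i a := by linarith [G.col hu hd a, G.col hn₁ hd a]
  have s1 := G.sp hu i hv (hu i)
  have s2 := G.sp hu i hi hv.noTies
  rw [Function.update_eq_self, ← hu₁, ha] at s1 s2
  have hb : φ u₁ i b = φ u i b := le_antisymm
    (le_of_mul_le_mul_left (by linarith) (mid_mem hi).1)
    (le_of_mul_le_mul_left (by linarith) (mid_mem hv).1)
  have := G.nb hu i hv.noTies (hu i) (by
    rw [Function.update_eq_self]
    exact G.row_ext hn₁ hu h i ha hb)
  rwa [Function.update_eq_self] at this

/-- Once the two other agents are identified, the agents' utilities are replaced one at a time. -/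
lemma Good.main (G : Good φ) {u u' : Fin 3 → Fin 3 → ℝ} (hu : NoTiesProfile u)
    (hord : ∀ k, SameOrder (u k) (u' k)) {i j k : Fin 3}
    (hd : Distinct i j k) {a b c : Fin 3} (hi : Ranks (u i) a b c) (hj : Ranks (u j) a c b)
    (hka : u k a < u k b) (hfull : ∀ x, 0 < φ u i x) : φ u' = φ u := by
  have tr : ∀ m {p q s : Fin 3}, Ranks (u m) p q s → Ranks (u' m) p q s := fun m p q s h =>
    ⟨(hord m p q).1 h.1, (hord m q s).1 h.2⟩
  have e1 := G.const_self hu hd hi hj hka hfull _ (tr i hi)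
  have n1 := noTies_update hu i (tr i hi).noTies
  set u₁ := Function.update u i (u' i) with hu₁
  have e2 := G.const_other n1 hd.1 (by rwa [e1]) (by simpa [hu₁, hd.1.symm] using hj) _ (tr j hj)
  have n2 := noTies_update n1 j (tr j hj).noTies
  set u₂ := Function.update u₁ j (u' j) with hu₂
  obtain ⟨p, q, s, hk⟩ := exists_ord (hu k)
  have e3 := G.const_other n2 hd.2.1 (by rwa [e2, e1])
    (by simpa [hu₂, hu₁, hd.2.1.symm, hd.2.2.symm] using hk) _ (tr k hk)
  have : Function.update u₂ k (u' k) = u' := by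
    funext m
    rcases hd.cases m with rfl | rfl | rfl
    · simp [hu₂, hu₁, hd.1, hd.2.1]
    · simp [hu₂, hd.2.2]
    · simp
  rw [this] at e3
  rw [e3, e2, e1]

end

theorem stmt10 (φ : (Fin 3 → Fin 3 → ℝ) → Fin 3 → Fin 3 → ℝ)
    (hB : BistochasticValued φ) (hE : Efficient φ) (hSP : StrategyProof φ)
    (hNB : NonBossy φ) (hC : NCContinuous φ)
    (u u' : Fin 3 → Fin 3 → ℝ) (hu : NoTiesProfile u) (hu' : NoTiesProfile u')
    (hord : ∀ k, SameOrder (u k) (u' k))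
    (i : Fin 3) (hfull : ∀ x, 0 < φ u i x) :
    φ u' = φ u := by
  have G : Good φ := ⟨hB, hE, hSP, hNB, hC⟩
  obtain ⟨a, b, c, hi⟩ := exists_ord (hu i)
  obtain ⟨j, hij⟩ := exists_ne i
  obtain ⟨k, hd⟩ := exists_third hij.symm
  rcases G.other_type hu hd.1 hi hfull with hj | hj <;>
    rcases G.other_type hu hd.2.1 hi hfull with hk | hk
  · -- Nobody but `i` would hold `b`.
    linarith [G.col hu hd b, G.lt_one hu hd.1.symm (x := b) (j := i), G.row hu hi.dist i,
      hfull a, hfull c]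
  · exact G.main hu hord hd hi hj.1 hk.1 hfull
  · exact G.main hu hord ⟨hd.2.1, hd.1, hd.2.2.symm⟩ hi hk.1 hj.1 hfull
  · -- Nobody but `i` would hold `a`.
    linarith [G.col hu hd a, G.row hu hi.dist i, hfull b, hfull c]
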